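/- With γ₃ = ∑_{x=1}^∞ [ (1/x³ + 3·ln x / x² + 3·(ln x)² / x) − ((ln(x+1))³ − (ln x)³) ] and γ₃′ = ∑_{x=2}^∞ [ ((ln x)³ − (ln(x−1))³) − (3·(ln x)² / x − 3·ln x / x² + 1/x³) ], one has γ₃ + γ₃′ = 1 + 6·(∑_{x=1}^∞ ln x / x²). -/

import Mathlib

open Real

/-!
Put `F x = (log x) ^ k`. The approximate derivatives of `F` are the exact increments of `t ↦ t ^ k`
from `t = log x` to `log x ± 1 / x`, so each error term compares the `k`-th powers of two numbers
which differ by `O(1 / x ^ 2)`: both error series converge. Adding the forward error at `x` to the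
backward error at `x + 1` cancels the exact differences of `F`. With `D⁺` and `D⁻` the approximate
derivatives, what remains is `(D⁺ x - D⁻ x) + (D⁻ x - D⁻ (x + 1))`. The second bracket telescopes to
`D⁻ 1`, so the partial sums of the first, whose terms are nonnegative, converge too. For `k = 3` the
first bracket is `6 * log x / x ^ 2` and `D⁻ 1 = 1`.
-/

open Filter Asymptotics Topology

/-- The approximate forward derivative of `(log x) ^ k`: the increment of `t ^ k` as `t` goes from
`log x` to `log x + 1 / x`, where `1 / x` stands in for `log (x + 1) - log x`. -/
noncomputable def logPowForwardDeriv (k : ℕ) (x : ℝ) : ℝ :=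
  (log x + 1 / x) ^ k - log x ^ k

/-- The approximate backward derivative of `(log x) ^ k`: the increment of `t ^ k` as `t` goes from
`log x - 1 / x` to `log x`, where `1 / x` stands in for `log x - log (x - 1)`. -/
noncomputable def logPowBackwardDeriv (k : ℕ) (x : ℝ) : ℝ :=
  log x ^ k - (log x - 1 / x) ^ k

/-- The forward error for `(log x) ^ k`, with the sign used in `γ₃`: approximate derivative minus
exact difference. -/
noncomputable def logPowForwardError (k : ℕ) (x : ℝ) : ℝ :=
  logPowForwardDeriv k x - (log (x + 1) ^ k - log x ^ k)

/-- The backward error for `(log x) ^ k`, with the sign used in `γ₃'`: exact difference minus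
approximate derivative. -/
noncomputable def logPowBackwardError (k : ℕ) (x : ℝ) : ℝ :=
  log x ^ k - log (x - 1) ^ k - logPowBackwardDeriv k x

section PowerInequalities

variable {R : Type*} [CommRing R] [LinearOrder R] [IsStrictOrderedRing R]

theorem abs_pow_sub_pow_le_of_abs_le {a b ε M : R} (k : ℕ) (hab : |a - b| ≤ ε)
    (ha : |a| ≤ M) (hb : |b| ≤ M) : |a ^ k - b ^ k| ≤ ε * (k * M ^ (k - 1)) := by
  have hε : 0 ≤ ε := (abs_nonneg _).trans hab
  calc |a ^ k - b ^ k| ≤ |a - b| * k * max |a| |b| ^ (k - 1) := abs_pow_sub_pow_le ..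
    _ = |a - b| * (k * max |a| |b| ^ (k - 1)) := mul_assoc ..
    _ ≤ ε * (k * M ^ (k - 1)) := by
      gcongr
      exact max_le ha hb

theorem sub_pow_le_add_pow {a h : R} (ha : 0 ≤ a) (hh : 0 ≤ h) (k : ℕ) :
    (a - h) ^ k ≤ (a + h) ^ k := by
  have habs : |a - h| ≤ a + h := abs_le.2 ⟨by linarith, by linarith⟩
  calc (a - h) ^ k ≤ |(a - h) ^ k| := le_abs_self _
    _ = |a - h| ^ k := abs_pow ..
    _ ≤ (a + h) ^ k := by gcongr

theorem two_mul_pow_le_add_pow_add_sub_pow {a h : R} (ha : 0 ≤ a) (hh : 0 ≤ h) (k : ℕ) :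
    2 * a ^ k ≤ (a + h) ^ k + (a - h) ^ k := by
  induction k with
  | zero => norm_num
  | succ k ih =>
    calc 2 * a ^ (k + 1) = a * (2 * a ^ k) := by ring
      _ ≤ a * ((a + h) ^ k + (a - h) ^ k) := by gcongr
      _ ≤ a * ((a + h) ^ k + (a - h) ^ k) + h * ((a + h) ^ k - (a - h) ^ k) :=
        le_add_of_nonneg_right (mul_nonneg hh (sub_nonneg.2 (sub_pow_le_add_pow ha hh k)))
      _ = (a + h) ^ (k + 1) + (a - h) ^ (k + 1) := by ring

end PowerInequalities

section LogIncrement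

variable {x : ℝ}

theorem log_add_one_sub_log_le_one_div (hx : 0 < x) : log (x + 1) - log x ≤ 1 / x := by
  have h := log_le_sub_one_of_pos (show 0 < (x + 1) / x by positivity)
  rw [log_div (by positivity) hx.ne', add_div, div_self hx.ne'] at h
  linarith

theorem one_div_add_one_le_log_add_one_sub_log (hx : 0 < x) :
    1 / (x + 1) ≤ log (x + 1) - log x := by
  have hx' : 0 < x + 1 := by positivity
  have h := log_le_sub_one_of_pos (div_pos hx hx')
  have hdiv : x / (x + 1) = 1 - 1 / (x + 1) := by field_simp; ring
  rw [log_div hx.ne' hx'.ne', hdiv] at h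
  linarith

theorem one_div_sub_one_div_add_one_le (hx : 0 < x) : 1 / x - 1 / (x + 1) ≤ 1 / x ^ 2 := by
  calc 1 / x - 1 / (x + 1) = 1 / (x * (x + 1)) := by field_simp; ring
    _ ≤ 1 / x ^ 2 := by gcongr; nlinarith

end LogIncrement

section Bounds

variable {x : ℝ} (k : ℕ)

theorem abs_logPowForwardError_le (hx : 1 ≤ x) :
    |logPowForwardError k x| ≤ 1 / x ^ 2 * (k * (log x + 1) ^ (k - 1)) := by
  have hx0 : 0 < x := by linarith
  have hlog : 0 ≤ log x := log_nonneg hx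
  have hinv : 0 < 1 / x ∧ 1 / x ≤ 1 := ⟨by positivity, (div_le_one hx0).2 hx⟩
  have hinv' : 0 < 1 / (x + 1) := by positivity
  have hupper := log_add_one_sub_log_le_one_div hx0
  have hlower := one_div_add_one_le_log_add_one_sub_log hx0
  have hgap := one_div_sub_one_div_add_one_le hx0
  have herror : logPowForwardError k x = (log x + 1 / x) ^ k - log (x + 1) ^ k := by
    unfold logPowForwardError logPowForwardDeriv; ring
  rw [herror]
  apply abs_pow_sub_pow_le_of_abs_le <;> rw [abs_of_nonneg] <;> linarith

theorem abs_logPowBackwardError_add_one_le (hx : 1 ≤ x) :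
    |logPowBackwardError k (x + 1)| ≤ 1 / x ^ 2 * (k * (log x + 1) ^ (k - 1)) := by
  have hx0 : 0 < x := by linarith
  have hlog : 0 ≤ log x := log_nonneg hx
  have hinv : 1 / x ≤ 1 := (div_le_one hx0).2 hx
  have hinv' : 0 < 1 / (x + 1) := by positivity
  have hupper := log_add_one_sub_log_le_one_div hx0
  have hlower := one_div_add_one_le_log_add_one_sub_log hx0
  have hgap := one_div_sub_one_div_add_one_le hx0
  have herror : logPowBackwardError k (x + 1) = (log (x + 1) - 1 / (x + 1)) ^ k - log x ^ k := by
    unfold logPowBackwardError logPowBackwardDeriv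
    rw [add_sub_cancel_right]
    ring
  rw [herror]
  apply abs_pow_sub_pow_le_of_abs_le <;> rw [abs_of_nonneg] <;> linarith

theorem abs_logPowBackwardDeriv_le (hx : 1 ≤ x) :
    |logPowBackwardDeriv k x| ≤ 1 / x * (k * (log x + 1) ^ (k - 1)) := by
  have hx0 : 0 < x := by linarith
  have hlog : 0 ≤ log x := log_nonneg hx
  have hinv : 0 < 1 / x ∧ 1 / x ≤ 1 := ⟨by positivity, (div_le_one hx0).2 hx⟩
  apply abs_pow_sub_pow_le_of_abs_le <;> rw [abs_le] <;> constructor <;> linarith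

theorem logPowBackwardDeriv_le_logPowForwardDeriv (hx : 1 ≤ x) :
    logPowBackwardDeriv k x ≤ logPowForwardDeriv k x := by
  have h := two_mul_pow_le_add_pow_add_sub_pow (log_nonneg hx)
    (show 0 ≤ 1 / x by positivity) k
  unfold logPowBackwardDeriv logPowForwardDeriv
  linarith

end Bounds

section Asymptotics

theorem isLittleO_log_add_one_pow_rpow_atTop (m : ℕ) {r : ℝ} (hr : 0 < r) :
    (fun x => (log x + 1) ^ m) =o[atTop] fun x => x ^ r := by
  have hlog : (fun x => log x + 1) =O[atTop] log :=
    (isBigO_refl log atTop).add isLittleO_const_log_atTop.isBigO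
  have hpow : (fun x => log x ^ m) =o[atTop] fun x => x ^ r := by
    simpa only [rpow_natCast] using isLittleO_log_rpow_rpow_atTop m hr
  exact (hlog.pow m).trans_isLittleO hpow

theorem tendsto_one_div_mul_log_add_one_pow_atTop (c : ℝ) (m : ℕ) :
    Tendsto (fun x => 1 / x * (c * (log x + 1) ^ m)) atTop (𝓝 0) := by
  have h := (isLittleO_log_add_one_pow_rpow_atTop m one_pos).tendsto_div_nhds_zero.const_mul c
  simp only [rpow_one, mul_zero] at h
  exact h.congr fun x => by ring

theorem summable_one_div_sq_mul_log_add_one_pow (c : ℝ) (m : ℕ) :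
    Summable fun n : ℕ => 1 / (n : ℝ) ^ 2 * (c * (log n + 1) ^ m) := by
  have hlog : (fun x : ℝ => c * (log x + 1) ^ m) =O[atTop] fun x => x ^ (1 / 2 : ℝ) :=
    (isLittleO_log_add_one_pow_rpow_atTop m one_half_pos).isBigO.const_mul_left c
  have hreal : (fun x : ℝ => 1 / x ^ 2 * (c * (log x + 1) ^ m)) =O[atTop]
      fun x => x ^ (-(3 / 2) : ℝ) := by
    refine ((isBigO_refl (fun x : ℝ => 1 / x ^ 2) atTop).mul hlog).congr' .rfl ?_
    filter_upwards [eventually_gt_atTop 0] with x hx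
    rw [one_div, ← rpow_natCast, ← rpow_neg hx.le, ← rpow_add hx]
    norm_num
  exact summable_of_isBigO_nat (Real.summable_nat_rpow.2 (by norm_num))
    (hreal.comp_tendsto tendsto_natCast_atTop_atTop)

end Asymptotics

section Series

variable (k : ℕ)

theorem summable_one_div_succ_sq_mul_log_succ_add_one_pow (c : ℝ) (m : ℕ) :
    Summable fun n : ℕ => 1 / ((n : ℝ) + 1) ^ 2 * (c * (log (n + 1) + 1) ^ m) := by
  simpa only [Nat.cast_add, Nat.cast_one] using
    (summable_nat_add_iff 1).2 (summable_one_div_sq_mul_log_add_one_pow c m)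

theorem summable_logPowForwardError : Summable fun n : ℕ => logPowForwardError k (n + 1) :=
  .of_norm_bounded (summable_one_div_succ_sq_mul_log_succ_add_one_pow k (k - 1)) fun n =>
    abs_logPowForwardError_le k (by simp)

theorem summable_logPowBackwardError :
    Summable fun n : ℕ => logPowBackwardError k (n + 1 + 1) :=
  .of_norm_bounded (summable_one_div_succ_sq_mul_log_succ_add_one_pow k (k - 1)) fun n =>
    abs_logPowBackwardError_add_one_le k (by simp)

theorem tendsto_logPowBackwardDeriv_atTop : Tendsto (logPowBackwardDeriv k) atTop (𝓝 0) := by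
  refine squeeze_zero_norm' ?_ (tendsto_one_div_mul_log_add_one_pow_atTop k (k - 1))
  filter_upwards [eventually_ge_atTop 1] with x hx using abs_logPowBackwardDeriv_le k hx

theorem logPowForwardDeriv_sub_logPowBackwardDeriv (x : ℝ) :
    logPowForwardDeriv k x - logPowBackwardDeriv k x =
      logPowForwardError k x + logPowBackwardError k (x + 1) -
        (logPowBackwardDeriv k x - logPowBackwardDeriv k (x + 1)) := by
  unfold logPowForwardError logPowBackwardError
  rw [add_sub_cancel_right]
  ring

theorem hasSum_logPowForwardDeriv_sub_logPowBackwardDeriv :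
    HasSum (fun n : ℕ => logPowForwardDeriv k (n + 1) - logPowBackwardDeriv k (n + 1))
      (∑' n : ℕ, logPowForwardError k (n + 1) + ∑' n : ℕ, logPowBackwardError k (n + 1 + 1) -
        logPowBackwardDeriv k 1) := by
  rw [hasSum_iff_tendsto_nat_of_nonneg fun n =>
    sub_nonneg.2 (logPowBackwardDeriv_le_logPowForwardDeriv k (by simp))]
  have herrors := ((summable_logPowForwardError k).hasSum.add
    (summable_logPowBackwardError k).hasSum).tendsto_sum_nat
  have hboundary : Tendsto (fun N : ℕ => logPowBackwardDeriv k 1 - logPowBackwardDeriv k (N + 1))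
      atTop (𝓝 (logPowBackwardDeriv k 1)) := by
    simpa only [sub_zero, Function.comp_apply] using ((tendsto_logPowBackwardDeriv_atTop k).comp
      (tendsto_atTop_add_const_right _ 1 tendsto_natCast_atTop_atTop)).const_sub _
  refine (herrors.sub hboundary).congr fun N => ?_
  have htelescope := Finset.sum_range_sub' (fun n : ℕ => logPowBackwardDeriv k (n + 1)) N
  simp only [Nat.cast_add, Nat.cast_one, Nat.cast_zero, zero_add] at htelescope
  rw [← htelescope, ← Finset.sum_sub_distrib]
  exact Finset.sum_congr rfl fun n _ => (logPowForwardDeriv_sub_logPowBackwardDeriv k _).symm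

end Series

section Cube

variable (x : ℝ)

theorem logPowForwardDeriv_three :
    logPowForwardDeriv 3 x = 1 / x ^ 3 + 3 * log x / x ^ 2 + 3 * log x ^ 2 / x := by
  unfold logPowForwardDeriv; ring

theorem logPowBackwardDeriv_three :
    logPowBackwardDeriv 3 x = 3 * log x ^ 2 / x - 3 * log x / x ^ 2 + 1 / x ^ 3 := by
  unfold logPowBackwardDeriv; ring

theorem logPowForwardDeriv_three_sub_logPowBackwardDeriv_three :
    logPowForwardDeriv 3 x - logPowBackwardDeriv 3 x = 6 * (log x / x ^ 2) := by
  rw [logPowForwardDeriv_three, logPowBackwardDeriv_three]; ring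

end Cube

/-- γ₃ + γ₃′ = 1 + 6·(∑_{x=1}^∞ ln x / x²). -/
theorem gamma_three_add_gamma_three_prime (γ₃ γ₃' : ℝ)
    (hγ₃ : γ₃ = ∑' x : ℕ,
      ((1 / ((x : ℝ) + 1) ^ 3 + 3 * Real.log ((x : ℝ) + 1) / ((x : ℝ) + 1) ^ 2 +
          3 * (Real.log ((x : ℝ) + 1)) ^ 2 / ((x : ℝ) + 1)) -
        ((Real.log ((x : ℝ) + 2)) ^ 3 - (Real.log ((x : ℝ) + 1)) ^ 3)))
    (hγ₃' : γ₃' = ∑' x : ℕ,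
      (((Real.log ((x : ℝ) + 2)) ^ 3 - (Real.log ((x : ℝ) + 1)) ^ 3) -
        (3 * (Real.log ((x : ℝ) + 2)) ^ 2 / ((x : ℝ) + 2) -
          3 * Real.log ((x : ℝ) + 2) / ((x : ℝ) + 2) ^ 2 + 1 / ((x : ℝ) + 2) ^ 3))) :
    γ₃ + γ₃' = 1 + 6 * (∑' x : ℕ, Real.log ((x : ℝ) + 1) / ((x : ℝ) + 1) ^ 2) := by
  have htwo (n : ℕ) : (n : ℝ) + 2 = n + 1 + 1 := by ring
  have hforward : γ₃ = ∑' n : ℕ, logPowForwardError 3 (n + 1) := by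
    simp only [hγ₃, logPowForwardError, logPowForwardDeriv_three, htwo]
  have hbackward : γ₃' = ∑' n : ℕ, logPowBackwardError 3 (n + 1 + 1) := by
    simp only [hγ₃', logPowBackwardError, logPowBackwardDeriv_three, htwo, add_sub_cancel_right]
  have hboundary : logPowBackwardDeriv 3 1 = 1 := by
    simp [logPowBackwardDeriv_three]
  have hsum := (hasSum_logPowForwardDeriv_sub_logPowBackwardDeriv 3).tsum_eq
  simp only [logPowForwardDeriv_three_sub_logPowBackwardDeriv_three, tsum_mul_left,
    ← hforward, ← hbackward, hboundary] at hsum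
  linarith
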